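/- There is no function U ∈ C²([1,∞)) that solves (1−ρ²)U''(ρ) + (2/ρ − 4ρ)U'(ρ) − 2U(ρ) + U(ρ)³ = 0 for all ρ > 1 and satisfies U(1) > √2. Equivalently, every solution regular at the past light cone ρ = 1 with U(1) = b > √2 becomes singular at some finite ρ > 1. -/

import Mathlib

/-!
Write `V = U'`. Letting `ρ → 1` in the equation gives `2 V(1) = U(1) (U(1)² - 2) > 0`. The quantity
`W = 6 ρ V - (U² - 2)` is therefore positive at `ρ = 1`. While `W > 0` and `U > √2`, the function `U`
increases, so `U > √2` cannot fail first; and at a first zero `ρ > 1` of `W` the equation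
yields `W' > 0`, which is impossible. Hence `W > 0` and `U > √2` on `[1, ∞)` (`barrier`).

Since `W > 0` says `U' / (U² - 2) > 1 / (6 ρ)`, the function
`log (U - √2) - log (U + √2) - (√2 / 3) log ρ` is increasing. It is less than `-(√2 / 3) log ρ`,
which tends to `-∞`: a contradiction (`no_global_growth`).
-/

/-- At a zero `r > 1` of the barrier `6 ρ U' - (U² - 2)`, the equation forces the derivative of the
barrier to be positive. Here `u`, `v`, `a` are the values of `U`, `U'`, `U''` at `r`. -/
lemma barrier_deriv_pos {r u v a : ℝ} (hr : 1 < r) (hu : √2 < u)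
    (hode : (1 - r ^ 2) * a + (2 / r - 4 * r) * v - 2 * u + u ^ 3 = 0)
    (hW : 6 * r * v - (u ^ 2 - 2) = 0) :
    0 < 6 * v + 6 * r * a - 2 * u * v := by
  have h2 : √2 ^ 2 = 2 := Real.sq_sqrt (by norm_num)
  have hs : 1 < √2 := by nlinarith [Real.sqrt_nonneg 2]
  have hu1 : 1 < u := hs.trans hu
  have hm : 0 < u ^ 2 - 2 := by nlinarith
  have hr0 : r ≠ 0 := by positivity
  have hq : 0 < r ^ 2 - 1 := by nlinarith
  have hv : v = (u ^ 2 - 2) / (6 * r) := by field_simp; linarith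
  have ha : a = (u ^ 2 - 2) * (1 / (3 * r ^ 2) - 2 / 3 + u) / (r ^ 2 - 1) := by
    rw [hv] at hode
    rw [eq_div_iff hq.ne']
    field_simp at hode ⊢
    linarith
  have key : 6 * v + 6 * r * a - 2 * u * v =
      (u ^ 2 - 2) * ((1 - u / 3) * (r ^ 2 - 1) + 2 + 6 * r ^ 2 * (u - 2 / 3))
        / (r * (r ^ 2 - 1)) := by
    rw [ha, hv]
    have := hq.ne'
    field_simp
    ring
  rw [key]
  have : 0 < (1 - u / 3) * (r ^ 2 - 1) + 2 + 6 * r ^ 2 * (u - 2 / 3) := by nlinarith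
  have : 0 < r := by linarith
  positivity

/-- The differential inequality `6 ρ U' > U² - 2`, together with `U > √2`, propagates from `ρ = 1`
to all of `[1, ∞)`. -/
lemma barrier {U V A : ℝ → ℝ} (hUc : ContinuousOn U (Set.Ici 1)) (hVc : ContinuousOn V (Set.Ici 1))
    (hU : ∀ x, 1 < x → HasDerivAt U (V x) x) (hV : ∀ x, 1 < x → HasDerivAt V (A x) x)
    (hode : ∀ x, 1 < x →
      (1 - x ^ 2) * A x + (2 / x - 4 * x) * V x - 2 * U x + (U x) ^ 3 = 0)
    (h1 : √2 < U 1) (hW1 : 0 < 6 * 1 * V 1 - (U 1 ^ 2 - 2)) :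
    ∀ x, 1 ≤ x → √2 < U x ∧ 0 < 6 * x * V x - (U x ^ 2 - 2) := by
  by_contra! hcon
  obtain ⟨R, hR, hbad⟩ := hcon
  have hWc : ContinuousOn (fun x => 6 * x * V x - (U x ^ 2 - 2)) (Set.Ici 1) := by fun_prop
  set W : ℝ → ℝ := fun x => 6 * x * V x - (U x ^ 2 - 2) with hWdef
  have hmc : ContinuousOn (fun x => min (U x - √2) (W x)) (Set.Icc 1 R) :=
    ((hUc.sub continuousOn_const).inf hWc).mono Set.Icc_subset_Ici_self
  -- `r` below is the first point at which one of the two strict inequalities fails.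
  have hcl : IsClosed (Set.Icc 1 R ∩ (fun x => min (U x - √2) (W x)) ⁻¹' Set.Iic 0) :=
    hmc.preimage_isClosed_of_isClosed isClosed_Icc isClosed_Iic
  have hcpt : IsCompact (Set.Icc 1 R ∩ (fun x => min (U x - √2) (W x)) ⁻¹' Set.Iic 0) :=
    isCompact_Icc.of_isClosed_subset hcl Set.inter_subset_left
  obtain ⟨r, ⟨⟨hr1, hrR⟩, hrm⟩, hleast⟩ := hcpt.exists_isLeast ⟨R, ⟨hR, le_rfl⟩, by
    rcases lt_or_ge (√2) (U R) with h | h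
    · exact min_le_of_right_le (hbad h)
    · exact min_le_of_left_le (sub_nonpos.2 h)⟩
  have hbelow : ∀ x, 1 ≤ x → x < r → √2 < U x ∧ 0 < W x := by
    intro x hx hxr
    by_contra hc
    refine absurd (hleast ⟨⟨hx, hxr.le.trans hrR⟩, ?_⟩) (not_le.2 hxr)
    by_contra hm
    simp only [Set.mem_preimage, Set.mem_Iic, not_le, lt_inf_iff, sub_pos] at hm
    exact hc hm
  have hr : 1 < r := by
    refine lt_of_le_of_ne hr1 ?_
    rintro rfl
    simp only [Set.mem_preimage, Set.mem_Iic, inf_le_iff, hWdef] at hrm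
    rcases hrm with h | h <;> linarith
  have h2 : √2 ^ 2 = 2 := Real.sq_sqrt (by norm_num)
  have hs0 := Real.sqrt_nonneg 2
  have hmono : StrictMonoOn U (Set.Icc 1 r) := by
    refine strictMonoOn_of_deriv_pos (convex_Icc 1 r) (hUc.mono Set.Icc_subset_Ici_self) ?_
    intro x hx
    rw [interior_Icc] at hx
    rw [(hU x hx.1).deriv]
    obtain ⟨hb1, hb2⟩ := hbelow x hx.1.le hx.2
    have hx0 : 0 < x := by linarith [hx.1]
    simp only [hWdef] at hb2
    have : 0 < 6 * x * V x := by nlinarith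
    exact pos_of_mul_pos_right this (by positivity)
  have hUr : √2 < U r := h1.trans (hmono ⟨le_rfl, hr1⟩ ⟨hr1, le_rfl⟩ hr)
  have hWr_le : W r ≤ 0 := by
    simp only [Set.mem_preimage, Set.mem_Iic, inf_le_iff] at hrm
    rcases hrm with h | h
    · linarith
    · exact h
  have hWd : HasDerivAt W (6 * V r + 6 * r * A r - 2 * U r * V r) r := by
    have := (((hasDerivAt_id r).const_mul 6).mul (hV r hr)).sub (((hU r hr).pow 2).sub_const 2)
    refine this.congr_deriv ?_
    simp only [id]
    push_cast
    ring
  have hleft : ∀ᶠ x in nhdsWithin r (Set.Iio r), 0 < W x := by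
    filter_upwards [Ioo_mem_nhdsLT hr] with x hx
    exact (hbelow x hx.1.le hx.2).2
  have hWr : W r = 0 := le_antisymm hWr_le <|
    ge_of_tendsto (hWd.continuousAt.tendsto.mono_left nhdsWithin_le_nhds)
      (hleft.mono fun _ h => h.le)
  have hpos := barrier_deriv_pos hr hUr (hode r hr) hWr
  -- All left slopes at `r` are negative, whereas they converge to the positive number `W' r`.
  have hslope := (hasDerivAt_iff_tendsto_slope.1 hWd).mono_left
    (nhdsWithin_mono r (s := Set.Iio r) fun x hx => ne_of_lt hx)
  refine absurd (le_of_tendsto hslope ?_) (not_le.2 hpos)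
  filter_upwards [hleft, self_mem_nhdsWithin] with x hx hxr
  rw [slope_def_field, hWr]
  exact div_nonpos_of_nonneg_of_nonpos (by linarith) (by linarith [Set.mem_Iio.1 hxr])

/-- The inequality `U' / (U² - 2) > 1 / (6 ρ)` cannot hold on all of `[1, ∞)` with `U > √2`: the
logarithm of `(U - √2) / (U + √2)` is negative but grows at least like `(√2 / 3) log ρ`. -/
lemma no_global_growth {U V : ℝ → ℝ} (hUc : ContinuousOn U (Set.Ici 1))
    (hU : ∀ x, 1 < x → HasDerivAt U (V x) x)
    (h : ∀ x, 1 ≤ x → √2 < U x ∧ 0 < 6 * x * V x - (U x ^ 2 - 2)) : False := by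
  have h2 : √2 ^ 2 = 2 := Real.sq_sqrt (by norm_num)
  have hs0 : 0 < √2 := by positivity
  set F : ℝ → ℝ := fun x => Real.log (U x - √2) - Real.log (U x + √2) - √2 / 3 * Real.log x
    with hF
  have hmono : MonotoneOn F (Set.Ici 1) := by
    refine monotoneOn_of_hasDerivWithinAt_nonneg (convex_Ici 1)
      (f' := fun x => V x / (U x - √2) - V x / (U x + √2) - √2 / 3 * x⁻¹) ?_ ?_ ?_
    · refine ((ContinuousOn.log (by fun_prop) ?_).sub (ContinuousOn.log (by fun_prop) ?_)).sub
        (continuousOn_const.mul (ContinuousOn.log continuousOn_id ?_))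
      · intro x hx
        exact (sub_pos.2 (h x hx).1).ne'
      · intro x hx
        exact (add_pos (hs0.trans (h x hx).1) hs0).ne'
      · intro x hx
        exact (zero_lt_one.trans_le hx).ne'
    · intro x hx
      rw [interior_Ici] at hx
      have hb := (h x (le_of_lt hx)).1
      have hx0 : x ≠ 0 := (zero_lt_one.trans hx).ne'
      have ha : U x - √2 ≠ 0 := (sub_pos.2 hb).ne'
      have hc : U x + √2 ≠ 0 := (add_pos (hs0.trans hb) hs0).ne'
      exact (((((hU x hx).sub_const _).log ha).sub (((hU x hx).add_const _).log hc)).sub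
        ((Real.hasDerivAt_log hx0).const_mul _)).hasDerivWithinAt
    · intro x hx
      rw [interior_Ici] at hx
      obtain ⟨hb, hw⟩ := h x (le_of_lt hx)
      have hx0 : 0 < x := zero_lt_one.trans hx
      have ha : 0 < U x - √2 := by linarith
      have hc : 0 < U x + √2 := by linarith
      have key : V x / (U x - √2) - V x / (U x + √2) - √2 / 3 * x⁻¹ =
          √2 * (6 * x * V x - (U x ^ 2 - √2 ^ 2)) / (3 * x * ((U x - √2) * (U x + √2))) := by
        field_simp
        ring
      rw [key, h2]
      positivity
  have hneg : ∀ x, 1 ≤ x → F x < -(√2 / 3 * Real.log x) := by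
    intro x hx
    have hb := (h x hx).1
    have := Real.log_lt_log (show 0 < U x - √2 by linarith) (show U x - √2 < U x + √2 by linarith)
    simp only [hF]
    linarith
  have hF1 : F 1 < 0 := by simpa using hneg 1 le_rfl
  -- At this point the upper bound for `F` equals `F 1`.
  have hR : 1 ≤ Real.exp (-(F 1) * 3 / √2) := by
    apply Real.one_le_exp
    have : 0 < -(F 1) := by linarith
    positivity
  have hle := hmono (Set.mem_Ici.2 le_rfl) (Set.mem_Ici.2 hR) hR
  have hlt := hneg _ hR
  rw [Real.log_exp] at hlt
  have : √2 / 3 * (-(F 1) * 3 / √2) = -(F 1) := by field_simp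
  linarith

/-- No `C²` solution of the profile equation on `[1,∞)` can have `U(1) > √2`:
`b`-orbits with `b > √2` become singular at some finite `ρ > 1`. -/
theorem cubic_wave_no_large_b_orbit :
    ¬ ∃ U : ℝ → ℝ,
      ContDiffOn ℝ 2 U (Set.Ici 1) ∧
      (∀ ρ : ℝ, 1 < ρ →
        (1 - ρ ^ 2) * deriv (deriv U) ρ + (2 / ρ - 4 * ρ) * deriv U ρ
          - 2 * U ρ + (U ρ) ^ 3 = 0) ∧
      Real.sqrt 2 < U 1 := by
  rintro ⟨U, hC, hode, h1⟩
  -- One-sided derivatives extend `U'` and `U''` continuously to the endpoint `1`, where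
  -- `deriv U` may be a junk value.
  set V := derivWithin U (Set.Ici 1) with hVdef
  set A := derivWithin V (Set.Ici 1) with hAdef
  have huniq := uniqueDiffOn_Ici (1 : ℝ)
  have hVC : ContDiffOn ℝ 1 V (Set.Ici 1) := hC.derivWithin huniq (by norm_num)
  have hAc : ContinuousOn A (Set.Ici 1) := hVC.continuousOn_derivWithin huniq le_rfl
  have hUc := hC.continuousOn
  have hVc := hVC.continuousOn
  have hU : ∀ x, 1 < x → HasDerivAt U (V x) x := fun x hx =>
    ((hC.differentiableOn (by norm_num)) x hx.le).hasDerivWithinAt.hasDerivAt (Ici_mem_nhds hx)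
  have hV : ∀ x, 1 < x → HasDerivAt V (A x) x := fun x hx =>
    ((hVC.differentiableOn (by norm_num)) x hx.le).hasDerivWithinAt.hasDerivAt (Ici_mem_nhds hx)
  have hode' : ∀ x, 1 < x →
      (1 - x ^ 2) * A x + (2 / x - 4 * x) * V x - 2 * U x + (U x) ^ 3 = 0 := by
    intro x hx
    have hev : deriv U =ᶠ[nhds x] V := by
      filter_upwards [Ioi_mem_nhds hx] with y hy
      exact (hU y hy).deriv
    have := hode x hx
    rwa [hev.deriv_eq, (hV x hx).deriv, (hU x hx).deriv] at this
  have hlim : (1 - (1 : ℝ) ^ 2) * A 1 + (2 / 1 - 4 * 1) * V 1 - 2 * U 1 + (U 1) ^ 3 = 0 := by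
    have hc : ContinuousOn (fun x : ℝ =>
        (1 - x ^ 2) * A x + (2 / x - 4 * x) * V x - 2 * U x + (U x) ^ 3) (Set.Ici 1) := by
      have : ContinuousOn (fun x : ℝ => 2 / x) (Set.Ici 1) :=
        continuousOn_const.div continuousOn_id fun x hx => (zero_lt_one.trans_le hx).ne'
      fun_prop
    have ht := (hc 1 Set.self_mem_Ici).mono Set.Ioi_subset_Ici_self
    refine tendsto_nhds_unique ht (tendsto_const_nhds.congr' ?_)
    filter_upwards [self_mem_nhdsWithin] with x hx
    exact (hode' x hx).symm
  have hW1 : 0 < 6 * 1 * V 1 - (U 1 ^ 2 - 2) := by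
    have h2 : √2 ^ 2 = 2 := Real.sq_sqrt (by norm_num)
    have hs : 1 < √2 := by nlinarith [Real.sqrt_nonneg 2]
    have hm : 0 < U 1 ^ 2 - 2 := by nlinarith
    have : 0 < (U 1 ^ 2 - 2) * (3 * U 1 - 1) := mul_pos hm (by linarith)
    nlinarith
  exact no_global_growth hUc hU (barrier hUc hVc hU hV hode' h1 hW1)
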